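/- Let n ≥ 1 be an integer and θ ∈ (0, π/2). Let s be a smooth capillary function on C_θ with τ[s] > 0, with positively 1-homogeneous extension G and Euclidean gradient ∇G. Then: (a) ∇G is injective on S^n_θ; (b) ⟨∇G(u), E_{n+1}⟩ > 0 for every u ∈ S^n_θ with u_{n+1} > cos θ, and ⟨∇G(u), E_{n+1}⟩ = 0 for every u ∈ ∂S^n_θ; (c) K := convexHull(∇G(S^n_θ)) is a compact convex set with nonempty interior contained in {x_{n+1} ≥ 0}, its support function satisfies h_K(u) = G(u) for every u ∈ S^n_θ, and the topological boundary of K equals ∇G(S^n_θ) ∪ (K ∩ {x_{n+1} = 0}). -/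

import Mathlib

open MeasureTheory Real Set
open scoped RealInnerProductSpace

noncomputable section

abbrev V (n : ℕ) := EuclideanSpace ℝ (Fin (n + 1))

/-- The vertical unit vector `E_{n+1}`. -/
def Etop (n : ℕ) : V n := EuclideanSpace.single (Fin.last n) 1

/-- The spherical cap `S^n_θ`. -/
def sphCap (n : ℕ) (θ : ℝ) : Set (V n) :=
  {u | ‖u‖ = 1 ∧ Real.cos θ ≤ u (Fin.last n)}

/-- The boundary circle `∂S^n_θ`. -/
def sphCapBdry (n : ℕ) (θ : ℝ) : Set (V n) :=
  {u | ‖u‖ = 1 ∧ u (Fin.last n) = Real.cos θ}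

/-- The capillary cap `C_θ`. -/
def capCap (n : ℕ) (θ : ℝ) : Set (V n) :=
  {ζ | 0 ≤ ζ (Fin.last n) ∧ ‖ζ + Real.cos θ • Etop n‖ = 1}

/-- The open cone over `S^n_θ`. -/
def coneCap (n : ℕ) (θ : ℝ) : Set (V n) :=
  {x | ∃ l : ℝ, 0 < l ∧ ∃ u ∈ sphCap n θ, x = l • u}

/-- `G` is a positively 1-homogeneous extension of `g : C_θ → ℝ` which is `C^m` on an
open neighborhood of the cone over `S^n_θ`. -/
def IsHomExt (n : ℕ) (θ : ℝ) (m : ℕ∞) (g G : V n → ℝ) : Prop :=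
  (∃ U : Set (V n), IsOpen U ∧ coneCap n θ ⊆ U ∧ ContDiffOn ℝ m G U) ∧
  (∀ l : ℝ, 0 < l → ∀ u ∈ sphCap n θ, G (l • u) = l * G u) ∧
  (∀ ζ ∈ capCap n θ, G (ζ + Real.cos θ • Etop n) = g ζ)

/-- The Hessian of `G` at `u` as a quadratic/bilinear form. -/
def hessQ (n : ℕ) (G : V n → ℝ) (u v w : V n) : ℝ :=
  fderiv ℝ (fderiv ℝ G) u v w

/-- The Hessian matrix `D²G(u)` in the standard coordinates. -/
def hessM (n : ℕ) (G : V n → ℝ) (u : V n) : Matrix (Fin (n + 1)) (Fin (n + 1)) ℝ :=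
  fun i j => fderiv ℝ (fderiv ℝ G) u (EuclideanSpace.single i 1) (EuclideanSpace.single j 1)

/-- `σ_j` of the eigenvalues of `D²G(u)` (via characteristic polynomial coefficients). -/
def sigmaElem (n : ℕ) (j : ℕ) (G : V n → ℝ) (u : V n) : ℝ :=
  (-1 : ℝ) ^ j * ((hessM n G u).charpoly.coeff (n + 1 - j))

/-- `τ[g] ≥ 0` : the Hessian of the extension is positive semidefinite on `S^n_θ`. -/
def TauNonneg (n : ℕ) (θ : ℝ) (G : V n → ℝ) : Prop :=
  ∀ u ∈ sphCap n θ, ∀ v : V n, 0 ≤ hessQ n G u v v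

/-- `τ[g] > 0`. -/
def TauPos (n : ℕ) (θ : ℝ) (G : V n → ℝ) : Prop :=
  TauNonneg n θ G ∧
  ∀ u ∈ sphCap n θ, ∀ v : V n, v ≠ 0 → ⟪v, u⟫ = 0 → 0 < hessQ n G u v v

/-- Capillary (Robin) boundary condition: `∂_{n+1}G = 0` on `∂S^n_θ`. -/
def IsCapillaryF (n : ℕ) (θ : ℝ) (G : V n → ℝ) : Prop :=
  ∀ u ∈ sphCapBdry n θ, fderiv ℝ G u (Etop n) = 0

/-- Reflection negating the horizontal coordinates. -/
def horizNeg (n : ℕ) (ζ : V n) : V n := (2 * ζ (Fin.last n)) • Etop n - ζ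

/-- Support function of a set. -/
def suppFn (n : ℕ) (K : Set (V n)) (u : V n) : ℝ := sSup ((fun y => ⟪u, y⟫) '' K)

/-- Relative interior (within the hyperplane `{x_{n+1}=0}`) of the base `K ∩ {x_{n+1}=0}`. -/
def relintBase (n : ℕ) (K : Set (V n)) : Set (V n) :=
  {x | x (Fin.last n) = 0 ∧ ∃ ε > 0, ∀ y : V n, y (Fin.last n) = 0 → ‖y - x‖ < ε → y ∈ K}

/-- A `θ`-capillary convex body. -/
def IsCapBody (n : ℕ) (θ : ℝ) (K : Set (V n)) : Prop :=
  IsCompact K ∧ Convex ℝ K ∧ (interior K).Nonempty ∧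
  (∀ x ∈ K, 0 ≤ x (Fin.last n)) ∧
  (∀ x ∈ K, 0 < x (Fin.last n) → ∀ u : V n, ‖u‖ = 1 → ⟪u, x⟫ = suppFn n K u →
    Real.cos θ ≤ u (Fin.last n)) ∧
  (∀ v : V n, ‖v‖ = 1 → v (Fin.last n) = 0 →
    suppFn n K (Real.sin θ • v + Real.cos θ • Etop n) = Real.sin θ * suppFn n K v) ∧
  (relintBase n K).Nonempty

/-- `ψ` is one of `x²`, `x^p (p<0)`, `-log x`. -/
def PsiOK (ψ : ℝ → ℝ) : Prop :=
  (ψ = fun x : ℝ => x ^ 2) ∨ (∃ p : ℝ, p < 0 ∧ ψ = fun x : ℝ => x ^ p) ∨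
    (ψ = fun x : ℝ => -Real.log x)


theorem IsCompact.convexHull_of_finiteDimensional {E : Type*} [NormedAddCommGroup E]
    [NormedSpace ℝ E] [FiniteDimensional ℝ E] {s : Set E} (hs : IsCompact s) :
    IsCompact (convexHull ℝ s) := by
  have key : convexHull ℝ s = ⋃ k ∈ Set.Iic (Module.finrank ℝ E + 1),
      (fun p : (Fin k → ℝ) × (Fin k → E) => ∑ i, p.1 i • p.2 i) ''
        (stdSimplex ℝ (Fin k) ×ˢ Set.univ.pi fun _ => s) := by
    ext x
    simp only [mem_iUnion]
    constructor
    · intro hx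
      obtain ⟨ι, hι, z, w, hz, hind, hw, hw1, hx⟩ := eq_pos_convex_span_of_mem_convexHull hx
      refine ⟨Fintype.card ι, ?_, ?_⟩
      · refine hind.card_le_finrank_succ.trans ?_
        gcongr
        exact Submodule.finrank_le _
      · let e := (Fintype.equivFin ι).symm
        refine ⟨(w ∘ e, z ∘ e), ⟨⟨fun i => (hw _).le, ?_⟩, fun i _ => hz ⟨_, rfl⟩⟩, ?_⟩
        · exact (e.sum_comp w).trans hw1
        · exact (e.sum_comp fun i => w i • z i).trans hx
    · rintro ⟨k, -, p, ⟨hp, hps⟩, rfl⟩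
      exact (convex_convexHull ℝ s).sum_mem (fun i _ => hp.1 i) hp.2
        fun i _ => subset_convexHull ℝ s (hps i trivial)
  rw [key]
  refine (Set.finite_Iic _).isCompact_biUnion fun k _ => ?_
  refine ((isCompact_stdSimplex ℝ (Fin k)).prod (isCompact_univ_pi fun _ => hs)).image ?_
  fun_prop

section Cone

variable {n : ℕ} {θ : ℝ}

theorem mem_coneCap_iff (hθ : 0 < Real.cos θ) {x : V n} :
    x ∈ coneCap n θ ↔ 0 < x (Fin.last n) ∧ Real.cos θ * ‖x‖ ≤ x (Fin.last n) := by
  constructor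
  · rintro ⟨l, hl, u, ⟨hu, hc⟩, rfl⟩
    simp only [PiLp.smul_apply, smul_eq_mul, norm_smul, Real.norm_eq_abs, abs_of_pos hl, hu]
    constructor <;> nlinarith
  · rintro ⟨h0, h⟩
    have hx : x ≠ 0 := by rintro rfl; simp at h0
    have hn : 0 < ‖x‖ := norm_pos_iff.2 hx
    refine ⟨‖x‖, hn, ‖x‖⁻¹ • x, ⟨by
      rw [norm_smul, norm_inv, norm_norm, inv_mul_cancel₀ hn.ne'], ?_⟩, by
      rw [smul_smul, mul_inv_cancel₀ hn.ne', one_smul]⟩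
    rw [PiLp.smul_apply, smul_eq_mul, inv_mul_eq_div, le_div_iff₀ hn]
    exact h

theorem sphCap_subset_coneCap : sphCap n θ ⊆ coneCap n θ :=
  fun u hu => ⟨1, one_pos, u, hu, (one_smul _ _).symm⟩

theorem sphCapBdry_subset_sphCap : sphCapBdry n θ ⊆ sphCap n θ :=
  fun _ hu => ⟨hu.1, hu.2.ge⟩

theorem smul_mem_coneCap {x : V n} (hx : x ∈ coneCap n θ) {l : ℝ} (hl : 0 < l) :
    l • x ∈ coneCap n θ := by
  obtain ⟨r, hr, u, hu, rfl⟩ := hx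
  exact ⟨l * r, mul_pos hl hr, u, hu, smul_smul _ _ _⟩

theorem convex_coneCap (hθ : 0 < Real.cos θ) : Convex ℝ (coneCap n θ) := by
  intro x hx y hy a b ha hb hab
  rw [mem_coneCap_iff hθ] at *
  have h := norm_add_le (a • x) (b • y)
  simp only [norm_smul, Real.norm_eq_abs, abs_of_nonneg ha, abs_of_nonneg hb] at h
  simp only [PiLp.add_apply, PiLp.smul_apply, smul_eq_mul]
  constructor
  · rcases ha.eq_or_lt with rfl | ha
    · obtain rfl : b = 1 := by linarith
      linarith [hy.1]
    · have := mul_pos ha hx.1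
      have := mul_nonneg hb hy.1.le
      linarith
  · nlinarith [mul_le_mul_of_nonneg_left hx.2 ha, mul_le_mul_of_nonneg_left hy.2 hb]

theorem Etop_last : Etop n (Fin.last n) = 1 := by simp [Etop]

theorem norm_Etop : ‖Etop n‖ = 1 := by simp [Etop]

theorem inner_Etop (x : V n) : ⟪x, Etop n⟫ = x (Fin.last n) := by
  simp [Etop, EuclideanSpace.inner_single_right]

theorem coneCap_mem_nhds (hθ : 0 < Real.cos θ) {x : V n} (h0 : 0 < x (Fin.last n))
    (hx : Real.cos θ * ‖x‖ < x (Fin.last n)) : coneCap n θ ∈ nhds x := by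
  have h1 : IsOpen {y : V n | 0 < y (Fin.last n) ∧ Real.cos θ * ‖y‖ < y (Fin.last n)} :=
    IsOpen.and (isOpen_lt (by fun_prop) (by fun_prop)) (isOpen_lt (by fun_prop) (by fun_prop))
  filter_upwards [h1.mem_nhds ⟨h0, hx⟩] with y hy
  exact (mem_coneCap_iff hθ).2 ⟨hy.1, hy.2.le⟩

theorem uniqueDiffOn_coneCap (hθ : 0 < Real.cos θ) (hθ1 : Real.cos θ < 1) :
    UniqueDiffOn ℝ (coneCap n θ) := by
  refine uniqueDiffOn_convex (convex_coneCap hθ) ⟨Etop n, ?_⟩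
  rw [mem_interior_iff_mem_nhds]
  apply coneCap_mem_nhds hθ <;> simp [Etop_last, norm_Etop, hθ1]

theorem isCompact_sphCap : IsCompact (sphCap n θ) := by
  have h : sphCap n θ = Metric.sphere 0 1 ∩ {u : V n | Real.cos θ ≤ u (Fin.last n)} := by
    ext u; simp [sphCap]
  rw [h]
  exact (isCompact_sphere _ _).inter_right (isClosed_le (by fun_prop) (by fun_prop))

/-- Moving a vector off the axis vertically, one meets the lateral boundary of the cone. -/
theorem exists_vertical_projection (hθ : θ ∈ Ioo 0 (π / 2)) {v : V n}
    (hv : v ≠ v (Fin.last n) • Etop n) :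
    ∃ t : ℝ, v + t • Etop n ∈ coneCap n θ ∧
      (v + t • Etop n) (Fin.last n) = Real.cos θ * ‖v + t • Etop n‖ ∧
      (v ∉ coneCap n θ → 0 < t) ∧ (Real.cos θ * ‖v‖ < v (Fin.last n) → t < 0) := by
  have hc : 0 < Real.cos θ := Real.cos_pos_of_mem_Ioo ⟨by linarith [hθ.1, Real.pi_pos], hθ.2⟩
  have hsn : 0 < Real.sin θ := Real.sin_pos_of_pos_of_lt_pi hθ.1 (by linarith [hθ.2, Real.pi_pos])
  have hcs := Real.sin_sq_add_cos_sq θ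
  set a := v (Fin.last n) with ha
  set p := v - a • Etop n with hp
  have hp0 : 0 < ‖p‖ := norm_pos_iff.2 (sub_ne_zero.2 hv)
  have hpE : ⟪p, Etop n⟫ = 0 := by
    rw [inner_Etop]; simp [hp, Etop_last, ha]
  have hnorm : ∀ b : ℝ, ‖p + b • Etop n‖ ^ 2 = ‖p‖ ^ 2 + b ^ 2 := by
    intro b
    rw [norm_add_sq_real, inner_smul_right, hpE, norm_smul, norm_Etop]
    simp
  have hva : v = p + a • Etop n := by simp [hp]
  obtain ⟨b, hb0, hbs⟩ : ∃ b, 0 < b ∧ b * Real.sin θ = Real.cos θ * ‖p‖ :=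
    ⟨Real.cos θ / Real.sin θ * ‖p‖, by positivity, by field_simp⟩
  have hw : v + (b - a) • Etop n = p + b • Etop n := by rw [hp]; module
  have hwl : (p + b • Etop n) (Fin.last n) = b := by simp [hp, Etop_last, ha]
  have hwn : b = Real.cos θ * ‖p + b • Etop n‖ := by
    rw [← sq_eq_sq₀ hb0.le (by positivity), mul_pow, hnorm]
    have := congrArg (· ^ 2) hbs
    simp only [mul_pow] at this
    nlinarith
  have hvn : ‖v‖ ^ 2 = ‖p‖ ^ 2 + a ^ 2 := by rw [← hnorm, ← hva]
  refine ⟨b - a, ?_, ?_, ?_, ?_⟩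
  · rw [hw, mem_coneCap_iff hc, hwl, ← hwn]
    exact ⟨hb0, le_rfl⟩
  · rw [hw, hwl, ← hwn]
  · intro hvC
    by_contra! hba
    apply hvC
    have ha0 : 0 < a := by linarith
    refine (mem_coneCap_iff hc).2 ⟨ha0, ?_⟩
    rw [← sq_le_sq₀ (by positivity) ha0.le, mul_pow, hvn]
    have h1 : Real.cos θ * ‖p‖ ≤ a * Real.sin θ := by rw [← hbs]; gcongr; linarith
    have h2 := pow_le_pow_left₀ (by positivity) h1 2
    simp only [mul_pow] at h2
    nlinarith
  · intro hlt
    have ha0 : 0 < a := lt_of_le_of_lt (by positivity) hlt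
    rw [← sq_lt_sq₀ (by positivity) ha0.le, mul_pow, hvn] at hlt
    have h3 : (Real.cos θ * ‖p‖) ^ 2 < (a * Real.sin θ) ^ 2 := by
      simp only [mul_pow]; nlinarith
    rw [← hbs] at h3
    have h4 := lt_of_pow_lt_pow_left₀ 2 (by positivity) h3
    linarith [lt_of_mul_lt_mul_right h4 hsn.le]

end Cone

section HomogeneousGradient

variable {n : ℕ} {θ : ℝ} {G : V n → ℝ}

theorem fderiv_self_of_homogeneous (hG : ∀ x ∈ coneCap n θ, ContDiffAt ℝ 2 G x)
    (hh : ∀ l : ℝ, 0 < l → ∀ x ∈ coneCap n θ, G (l • x) = l * G x)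
    {x : V n} (hx : x ∈ coneCap n θ) : fderiv ℝ G x x = G x := by
  have h1 : HasFDerivAt G (fderiv ℝ G x) ((1 : ℝ) • x) := by
    rw [one_smul]; exact ((hG x hx).differentiableAt (by norm_num)).hasFDerivAt
  have h2 := h1.comp_hasDerivAt (1 : ℝ) ((hasDerivAt_id (1 : ℝ)).smul_const x)
  have h3 : HasDerivAt (G ∘ fun t : ℝ => id t • x) (1 * G x) 1 := by
    refine ((hasDerivAt_id (1 : ℝ)).mul_const (G x)).congr_of_eventuallyEq ?_
    filter_upwards [lt_mem_nhds one_pos] with t ht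
    exact hh t ht x hx
  simpa using h2.unique h3

theorem fderiv_smul_of_homogeneous (hθ : 0 < Real.cos θ) (hθ1 : Real.cos θ < 1)
    (hG : ∀ x ∈ coneCap n θ, ContDiffAt ℝ 2 G x)
    (hh : ∀ l : ℝ, 0 < l → ∀ x ∈ coneCap n θ, G (l • x) = l * G x)
    {x : V n} (hx : x ∈ coneCap n θ) {l : ℝ} (hl : 0 < l) :
    fderiv ℝ G (l • x) = fderiv ℝ G x := by
  have hd : ∀ y ∈ coneCap n θ, HasFDerivAt G (fderiv ℝ G y) y := fun y hy =>
    ((hG y hy).differentiableAt (by norm_num)).hasFDerivAt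
  have h1 : HasFDerivWithinAt (fun y => G (l • y))
      ((fderiv ℝ G (l • x)).comp (l • ContinuousLinearMap.id ℝ (V n))) (coneCap n θ) x :=
    ((hd _ (smul_mem_coneCap hx hl)).comp x
      ((hasFDerivAt_id x).const_smul l)).hasFDerivWithinAt
  have h2 : HasFDerivWithinAt (fun y => G (l • y)) (l • fderiv ℝ G x) (coneCap n θ) x :=
    ((hd x hx).const_smul l).hasFDerivWithinAt.congr (fun y hy => hh l hl y hy) (hh l hl x hx)
  have h3 := (uniqueDiffOn_coneCap hθ hθ1 x hx).eq h1 h2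
  ext v
  have h4 := congrArg (fun f : V n →L[ℝ] ℝ => f v) h3
  simpa [hl.ne'] using h4

theorem fderiv_fderiv_self (hθ : 0 < Real.cos θ) (hθ1 : Real.cos θ < 1)
    (hG : ∀ x ∈ coneCap n θ, ContDiffAt ℝ 2 G x)
    (hh : ∀ l : ℝ, 0 < l → ∀ x ∈ coneCap n θ, G (l • x) = l * G x)
    {x : V n} (hx : x ∈ coneCap n θ) : fderiv ℝ (fderiv ℝ G) x x = 0 := by
  have h1 : HasFDerivAt (fderiv ℝ G) (fderiv ℝ (fderiv ℝ G) x) ((1 : ℝ) • x) := by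
    rw [one_smul]
    exact (((hG x hx).fderiv_right (m := 1) (by norm_num)).differentiableAt
      (by norm_num)).hasFDerivAt
  have h2 := h1.comp_hasDerivAt (1 : ℝ) ((hasDerivAt_id (1 : ℝ)).smul_const x)
  have h3 : HasDerivAt (fderiv ℝ G ∘ fun t : ℝ => id t • x) 0 1 := by
    refine (hasDerivAt_const (1 : ℝ) (fderiv ℝ G x)).congr_of_eventuallyEq ?_
    filter_upwards [lt_mem_nhds one_pos] with t ht
    exact fderiv_smul_of_homogeneous hθ hθ1 hG hh hx ht
  simpa using h2.unique h3

theorem fderiv_fderiv_smul (hθ : 0 < Real.cos θ) (hθ1 : Real.cos θ < 1)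
    (hG : ∀ x ∈ coneCap n θ, ContDiffAt ℝ 2 G x)
    (hh : ∀ l : ℝ, 0 < l → ∀ x ∈ coneCap n θ, G (l • x) = l * G x)
    {x : V n} (hx : x ∈ coneCap n θ) {l : ℝ} (hl : 0 < l) :
    l • fderiv ℝ (fderiv ℝ G) (l • x) = fderiv ℝ (fderiv ℝ G) x := by
  have hd : ∀ y ∈ coneCap n θ, HasFDerivAt (fderiv ℝ G) (fderiv ℝ (fderiv ℝ G) y) y :=
    fun y hy => (((hG y hy).fderiv_right (m := 1) (by norm_num)).differentiableAt
      (by norm_num)).hasFDerivAt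
  have h1 : HasFDerivWithinAt (fun y => fderiv ℝ G (l • y))
      ((fderiv ℝ (fderiv ℝ G) (l • x)).comp (l • ContinuousLinearMap.id ℝ (V n))) (coneCap n θ) x :=
    ((hd _ (smul_mem_coneCap hx hl)).comp x
      ((hasFDerivAt_id x).const_smul l)).hasFDerivWithinAt
  have h2 : HasFDerivWithinAt (fun y => fderiv ℝ G (l • y)) (fderiv ℝ (fderiv ℝ G) x)
      (coneCap n θ) x :=
    (hd x hx).hasFDerivWithinAt.congr
      (fun y hy => fderiv_smul_of_homogeneous hθ hθ1 hG hh hy hl)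
      (fderiv_smul_of_homogeneous hθ hθ1 hG hh hx hl)
  have h3 := (uniqueDiffOn_coneCap hθ hθ1 x hx).eq h1 h2
  ext v w
  have h4 := congrArg (fun f : V n →L[ℝ] V n →L[ℝ] ℝ => f v w) h3
  simpa using h4

/-- The Hessian is positive on vectors that are not radial, at every point of the cone. -/
theorem fderiv_fderiv_pos (hθ : 0 < Real.cos θ) (hθ1 : Real.cos θ < 1)
    (hG : ∀ x ∈ coneCap n θ, ContDiffAt ℝ 2 G x)
    (hh : ∀ l : ℝ, 0 < l → ∀ x ∈ coneCap n θ, G (l • x) = l * G x) (hτ : TauPos n θ G)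
    {x v : V n} (hx : x ∈ coneCap n θ) (hv : ∀ a : ℝ, v ≠ a • x) :
    0 < fderiv ℝ (fderiv ℝ G) x v v := by
  obtain ⟨l, hl, u, hu, rfl⟩ := hx
  have huC := sphCap_subset_coneCap hu
  have hsymm : IsSymmSndFDerivAt ℝ G u :=
    (hG u huC).isSymmSndFDerivAt (by simp)
  set w := v - ⟪v, u⟫ • u with hw
  have hw0 : w ≠ 0 := by
    intro h
    apply hv (⟪v, u⟫ / l)
    rw [smul_smul, div_mul_cancel₀ _ hl.ne']
    exact sub_eq_zero.1 h
  have hwu : ⟪w, u⟫ = 0 := by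
    rw [hw, inner_sub_left, inner_smul_left, real_inner_self_eq_norm_sq, hu.1]
    simp
  have hpos : 0 < fderiv ℝ (fderiv ℝ G) u w w := hτ.2 u hu w hw0 hwu
  have hself := fderiv_fderiv_self hθ hθ1 hG hh huC
  have hvw : fderiv ℝ (fderiv ℝ G) u v v = fderiv ℝ (fderiv ℝ G) u w w := by
    have h0 : fderiv ℝ (fderiv ℝ G) u v u = 0 := by rw [hsymm.eq]; simp [hself]
    simp [hw, hself, h0]
  have hsm := congrArg (fun f : V n →L[ℝ] V n →L[ℝ] ℝ => f v v)
    (fderiv_fderiv_smul hθ hθ1 hG hh huC hl)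
  simp only [smul_apply, smul_eq_mul] at hsm
  rw [hvw] at hsm
  exact pos_of_mul_pos_right (hsm ▸ hpos) hl.le

/-- Strict monotonicity of the gradient along segments of the cone that are not radial. -/
theorem fderiv_lt_fderiv (hθ : 0 < Real.cos θ) (hθ1 : Real.cos θ < 1)
    (hG : ∀ x ∈ coneCap n θ, ContDiffAt ℝ 2 G x)
    (hh : ∀ l : ℝ, 0 < l → ∀ x ∈ coneCap n θ, G (l • x) = l * G x) (hτ : TauPos n θ G)
    {x y : V n} (hx : x ∈ coneCap n θ) (hy : y ∈ coneCap n θ)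
    (hxy : LinearIndependent ℝ ![x, y]) :
    fderiv ℝ G x (y - x) < fderiv ℝ G y (y - x) := by
  rw [LinearIndependent.pair_iff] at hxy
  have hmem : ∀ t ∈ Set.Icc (0 : ℝ) 1, x + t • (y - x) ∈ coneCap n θ := fun t ht =>
    (convex_coneCap hθ).add_smul_sub_mem hx hy ht
  have hder : ∀ t ∈ Set.Icc (0 : ℝ) 1,
      HasDerivAt (fun t : ℝ => fderiv ℝ G (x + t • (y - x)) (y - x))
        (fderiv ℝ (fderiv ℝ G) (x + t • (y - x)) (y - x) (y - x)) t := by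
    intro t ht
    have h1 : HasFDerivAt (fderiv ℝ G) _ (x + t • (y - x)) :=
      (((hG _ (hmem t ht)).fderiv_right (m := 1) (by norm_num)).differentiableAt
        (by norm_num)).hasFDerivAt
    have h2 : HasDerivAt (fun t : ℝ => x + t • (y - x)) (y - x) t := by
      simpa using ((hasDerivAt_id t).smul_const (y - x)).const_add x
    exact (ContinuousLinearMap.apply ℝ ℝ (y - x)).hasFDerivAt.comp_hasDerivAt t
      (h1.comp_hasDerivAt t h2)
  have hmono := strictMonoOn_of_deriv_pos (convex_Icc (0 : ℝ) 1)
    (fun t ht => (hder t ht).continuousAt.continuousWithinAt) (fun t ht => by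
      have ht' := interior_subset ht
      rw [(hder t ht').deriv]
      refine fderiv_fderiv_pos hθ hθ1 hG hh hτ (hmem t ht') fun a ha => ?_
      have h := hxy (-1 - a * (1 - t)) (1 - a * t) (by
        rw [← sub_eq_zero.2 ha]; module)
      have h1 : a * (1 - t) + a * t = 0 := by linarith [h.1, h.2]
      have h2 : a = 0 := by linarith
      simp [h2] at h)
  simpa using hmono (by simp) (by simp) one_pos

theorem fderiv_lt_of_linearIndependent (hθ : 0 < Real.cos θ) (hθ1 : Real.cos θ < 1)
    (hG : ∀ x ∈ coneCap n θ, ContDiffAt ℝ 2 G x)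
    (hh : ∀ l : ℝ, 0 < l → ∀ x ∈ coneCap n θ, G (l • x) = l * G x) (hτ : TauPos n θ G)
    {x y : V n} (hx : x ∈ coneCap n θ) (hy : y ∈ coneCap n θ)
    (hxy : LinearIndependent ℝ ![x, y]) :
    fderiv ℝ G x y < G y := by
  have hmem : ∀ t ∈ Set.Icc (0 : ℝ) 1, x + t • (y - x) ∈ coneCap n θ := fun t ht =>
    (convex_coneCap hθ).add_smul_sub_mem hx hy ht
  have hder : ∀ t ∈ Set.Icc (0 : ℝ) 1, HasDerivAt (fun t : ℝ => G (x + t • (y - x)))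
      (fderiv ℝ G (x + t • (y - x)) (y - x)) t := by
    intro t ht
    have h1 : HasFDerivAt G _ (x + t • (y - x)) :=
      ((hG _ (hmem t ht)).differentiableAt (by norm_num)).hasFDerivAt
    have h2 : HasDerivAt (fun t : ℝ => x + t • (y - x)) (y - x) t := by
      simpa using ((hasDerivAt_id t).smul_const (y - x)).const_add x
    exact h1.comp_hasDerivAt t h2
  obtain ⟨t, ht, hslope⟩ := exists_hasDerivAt_eq_slope _ _ one_pos
    (fun t ht => (hder t ht).continuousAt.continuousWithinAt)
    (fun t ht => hder t (Ioo_subset_Icc_self ht))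
  have hlt := fderiv_lt_fderiv hθ hθ1 hG hh hτ hx (hmem t (Ioo_subset_Icc_self ht)) (by
    rw [LinearIndependent.pair_iff] at hxy ⊢
    intro a b hab
    have h := hxy (a + b * (1 - t)) (b * t) (by rw [← hab]; module)
    obtain rfl : b = 0 := by simpa [ht.1.ne'] using h.2
    simpa using h.1)
  rw [add_sub_cancel_left, map_smul, map_smul, smul_eq_mul, smul_eq_mul,
    mul_lt_mul_iff_right₀ ht.1, hslope, map_sub, fderiv_self_of_homogeneous hG hh hx] at hlt
  simp at hlt
  linarith

theorem linearIndependent_of_mem_sphCap (hθ : 0 < Real.cos θ) {x y : V n}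
    (hx : x ∈ sphCap n θ) (hy : y ∈ sphCap n θ) (hxy : x ≠ y) :
    LinearIndependent ℝ ![x, y] := by
  have hx0 : x ≠ 0 := by rintro rfl; simp [sphCap] at hx
  rw [LinearIndependent.pair_iff' hx0]
  rintro a rfl
  have h1 := hy.1
  rw [norm_smul, hx.1, mul_one, Real.norm_eq_abs] at h1
  have h2 : 0 < a := by
    have := hθ.trans_le hy.2
    rw [PiLp.smul_apply, smul_eq_mul] at this
    exact pos_of_mul_pos_left this (hθ.trans_le hx.2).le
  rw [abs_of_pos h2] at h1
  simp [h1] at hxy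

theorem fderiv_Etop_of_mem_boundary (hθ : 0 < Real.cos θ) (hθ1 : Real.cos θ < 1)
    (hG : ∀ x ∈ coneCap n θ, ContDiffAt ℝ 2 G x)
    (hh : ∀ l : ℝ, 0 < l → ∀ x ∈ coneCap n θ, G (l • x) = l * G x)
    (hcap : IsCapillaryF n θ G) {w : V n} (hw : w ∈ coneCap n θ)
    (hwb : w (Fin.last n) = Real.cos θ * ‖w‖) : fderiv ℝ G w (Etop n) = 0 := by
  obtain ⟨r, hr, u, hu, rfl⟩ := hw
  rw [fderiv_smul_of_homogeneous hθ hθ1 hG hh (sphCap_subset_coneCap hu) hr]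
  refine hcap u ⟨hu.1, ?_⟩
  rw [norm_smul, hu.1, PiLp.smul_apply, smul_eq_mul, Real.norm_eq_abs, abs_of_pos hr] at hwb
  exact mul_left_cancel₀ hr.ne' (by linarith)

theorem sphCapBdry_nonempty (hn : 1 ≤ n) (hθ : θ ∈ Ioo 0 (π / 2)) :
    (sphCapBdry n θ).Nonempty := by
  have h0 : (0 : Fin (n + 1)) ≠ Fin.last n := by
    intro h; have := congrArg Fin.val h; simp at this; omega
  obtain ⟨t, hw, hwb, -⟩ := exists_vertical_projection (n := n) hθ
    (v := EuclideanSpace.single 0 1) (by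
      intro h; have := congrArg (fun x : V n => x 0) h; simp [Etop, h0.symm] at this)
  generalize (EuclideanSpace.single 0 1 : V n) + t • Etop n = w at hw hwb
  obtain ⟨r, hr, u, hu, rfl⟩ := hw
  rw [norm_smul, hu.1, PiLp.smul_apply, smul_eq_mul, Real.norm_eq_abs, abs_of_pos hr] at hwb
  exact ⟨u, hu.1, mul_left_cancel₀ hr.ne' (by linarith)⟩

theorem linearIndependent_add_smul_Etop {v : V n} (hv : v ≠ v (Fin.last n) • Etop n) {t : ℝ}
    (ht : t ≠ 0) : LinearIndependent ℝ ![v + t • Etop n, v] := by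
  rw [LinearIndependent.pair_iff]
  intro a b hab
  have hsum : (a + b) • v + (a * t) • Etop n = 0 := by rw [← hab]; module
  have h1 : a + b = 0 := by
    by_contra hne
    have hlast := congrArg (fun x : V n => x (Fin.last n)) hsum
    simp [Etop_last] at hlast
    apply hv
    have : (a + b) • (v - v (Fin.last n) • Etop n) = 0 := by
      rw [← hsum, smul_sub, smul_smul, eq_neg_of_add_eq_zero_right hlast]
      module
    exact sub_eq_zero.1 ((smul_eq_zero.1 this).resolve_left hne)
  have hE : Etop n ≠ 0 := by rw [← norm_pos_iff, norm_Etop]; exact one_pos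
  rw [h1, zero_smul, zero_add, smul_eq_zero, mul_eq_zero] at hsum
  have ha : a = 0 := (hsum.resolve_right hE).resolve_right ht
  exact ⟨ha, by linarith⟩

theorem fderiv_Etop_pos (hn : 1 ≤ n) (hθ : θ ∈ Ioo 0 (π / 2)) (hc : 0 < Real.cos θ)
    (hc1 : Real.cos θ < 1) (hG : ∀ x ∈ coneCap n θ, ContDiffAt ℝ 2 G x)
    (hh : ∀ l : ℝ, 0 < l → ∀ x ∈ coneCap n θ, G (l • x) = l * G x)
    (hcap : IsCapillaryF n θ G) (hτ : TauPos n θ G) {u : V n} (hu : u ∈ sphCap n θ)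
    (hu1 : Real.cos θ < u (Fin.last n)) : 0 < fderiv ℝ G u (Etop n) := by
  have huC := sphCap_subset_coneCap hu
  have hu0 : 0 < u (Fin.last n) := hc.trans hu1
  by_cases hv : u = u (Fin.last n) • Etop n
  · obtain ⟨b, hb⟩ := sphCapBdry_nonempty hn hθ
    have hbC := sphCapBdry_subset_sphCap hb
    have hbu : b ≠ u := by rintro rfl; exact hu1.ne' hb.2
    have h := fderiv_lt_of_linearIndependent hc hc1 hG hh hτ (sphCap_subset_coneCap hbC) huC
      (linearIndependent_of_mem_sphCap hc hbC hu hbu)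
    rw [← fderiv_self_of_homogeneous hG hh huC] at h
    have h1 : ∀ x, fderiv ℝ G x u = u (Fin.last n) * fderiv ℝ G x (Etop n) := fun x => by
      conv_lhs => rw [hv, map_smul, smul_eq_mul]
    rw [h1, h1, hcap b hb, mul_zero] at h
    exact pos_of_mul_pos_right h hu0.le
  · obtain ⟨t, hw, hwb, -, ht⟩ := exists_vertical_projection hθ hv
    replace ht := ht (by rwa [hu.1, mul_one])
    have h := fderiv_lt_fderiv hc hc1 hG hh hτ hw huC
      (linearIndependent_add_smul_Etop hv ht.ne)
    have h1 : u - (u + t • Etop n) = (-t) • Etop n := by module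
    rw [h1, map_smul, map_smul, fderiv_Etop_of_mem_boundary hc hc1 hG hh hcap hw hwb, smul_zero,
      smul_eq_mul] at h
    exact pos_of_mul_pos_right h (by linarith)

end HomogeneousGradient

theorem convex_openHalfSpace_union_singleton {E : Type*} [NormedAddCommGroup E]
    [InnerProductSpace ℝ E] (v p : E) :
    Convex ℝ ({y | ⟪v, y⟫ < ⟪v, p⟫} ∪ {p}) := by
  intro x hx y hy a b ha hb hab
  rcases ha.eq_or_lt with rfl | ha
  · obtain rfl : b = 1 := by linarith
    simpa using hy
  rcases hb.eq_or_lt with rfl | hb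
  · obtain rfl : a = 1 := by linarith
    simpa using hx
  have hp : ⟪v, p⟫ = a * ⟪v, p⟫ + b * ⟪v, p⟫ := by rw [← add_mul, hab, one_mul]
  simp only [mem_union, mem_ofPred_eq, mem_singleton_iff, inner_add_right,
    inner_smul_right] at hx hy ⊢
  rcases hx with hx | rfl <;> rcases hy with hy | rfl
  · left; nlinarith
  · left; nlinarith
  · left; nlinarith
  · right; rw [← add_smul, hab, one_smul]

theorem mem_frontier_of_inner_le {E : Type*} [NormedAddCommGroup E] [InnerProductSpace ℝ E]
    {K : Set E} {v x : E} (hv : v ≠ 0) (hx : x ∈ K) (h : ∀ y ∈ K, ⟪v, y⟫ ≤ ⟪v, x⟫) :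
    x ∈ frontier K := by
  refine ⟨subset_closure hx, fun h_int => hv ?_⟩
  have hmax : IsLocalMax (innerSL ℝ v) x := by
    filter_upwards [mem_interior_iff_mem_nhds.1 h_int] with y hy
    simpa using h y hy
  have h0 := hmax.hasFDerivAt_eq_zero (innerSL ℝ v).hasFDerivAt
  have := congrArg (fun f : E →L[ℝ] ℝ => f v) h0
  simpa using this

theorem Convex.exists_inner_le_of_mem_frontier {E : Type*} [NormedAddCommGroup E]
    [InnerProductSpace ℝ E] [CompleteSpace E] {K : Set E} (hK : Convex ℝ K)
    (h_int : (interior K).Nonempty) {x : E} (hx : x ∈ frontier K) :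
    ∃ v : E, v ≠ 0 ∧ ∀ y ∈ K, ⟪v, y⟫ ≤ ⟪v, x⟫ := by
  obtain ⟨f, hf⟩ := geometric_hahn_banach_open_point hK.interior isOpen_interior hx.2
  obtain ⟨y₀, hy₀⟩ := h_int
  refine ⟨(InnerProductSpace.toDual ℝ E).symm f, ?_, fun y hy => ?_⟩
  · intro h
    have hf0 : f = 0 := by simpa using h
    simpa [hf0] using hf y₀ hy₀
  · rw [InnerProductSpace.toDual_symm_apply, InnerProductSpace.toDual_symm_apply]
    have hcl : closure (interior K) ⊆ {y | f y ≤ f x} :=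
      closure_minimal (fun z hz => (hf z hz).le) (isClosed_le (by fun_prop) (by fun_prop))
    rw [hK.closure_interior_eq_closure_of_nonempty_interior ⟨y₀, hy₀⟩] at hcl
    exact hcl (subset_closure hy)

/-- the gradient map of a strictly convex capillary support function
produces a capillary convex body. -/
theorem capillary_gradient_body (n : ℕ) (hn : 1 ≤ n) (θ : ℝ) (hθ : θ ∈ Ioo 0 (π / 2))
    (s G : V n → ℝ) (hs : IsHomExt n θ ⊤ s G) (hcap : IsCapillaryF n θ G)
    (hτ : TauPos n θ G) :
    Set.InjOn (gradient G) (sphCap n θ) ∧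
    (∀ u ∈ sphCap n θ, Real.cos θ < u (Fin.last n) → 0 < (gradient G u) (Fin.last n)) ∧
    (∀ u ∈ sphCapBdry n θ, (gradient G u) (Fin.last n) = 0) ∧
    (∀ K : Set (V n), K = convexHull ℝ (gradient G '' sphCap n θ) →
      IsCompact K ∧ Convex ℝ K ∧ (interior K).Nonempty ∧
      (∀ x ∈ K, 0 ≤ x (Fin.last n)) ∧
      (∀ u ∈ sphCap n θ, suppFn n K u = G u) ∧
      frontier K = (gradient G '' sphCap n θ) ∪ (K ∩ {x : V n | x (Fin.last n) = 0})) := by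
  have hc : 0 < Real.cos θ := Real.cos_pos_of_mem_Ioo ⟨by linarith [hθ.1, Real.pi_pos], hθ.2⟩
  have hc1 : Real.cos θ < 1 := by
    rw [← Real.cos_zero]
    exact Real.cos_lt_cos_of_nonneg_of_le_pi_div_two le_rfl hθ.2.le hθ.1
  obtain ⟨⟨U, hU, hCU, hGU⟩, hhom, -⟩ := hs
  have hG : ∀ x ∈ coneCap n θ, ContDiffAt ℝ 2 G x := fun x hx =>
    (hGU.contDiffAt (hU.mem_nhds (hCU hx))).of_le ENat.LEInfty.out
  have hh : ∀ l : ℝ, 0 < l → ∀ x ∈ coneCap n θ, G (l • x) = l * G x := by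
    rintro l hl _ ⟨r, hr, u, hu, rfl⟩
    rw [smul_smul, hhom _ (mul_pos hl hr) u hu, hhom r hr u hu, mul_assoc]
  have hlast : ∀ u, (gradient G u) (Fin.last n) = fderiv ℝ G u (Etop n) := fun u => by
    rw [← inner_Etop, inner_gradient_left]
  have hinner : ∀ v u : V n, ⟪v, gradient G u⟫ = fderiv ℝ G u v := fun v u => by
    rw [real_inner_comm, inner_gradient_left]
  have heuler : ∀ u ∈ sphCap n θ, fderiv ℝ G u u = G u := fun u hu =>
    fderiv_self_of_homogeneous hG hh (sphCap_subset_coneCap hu)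
  have hlt : ∀ u ∈ sphCap n θ, ∀ w ∈ sphCap n θ, w ≠ u → fderiv ℝ G w u < G u :=
    fun u hu w hw hwu => fderiv_lt_of_linearIndependent hc hc1 hG hh hτ
      (sphCap_subset_coneCap hw) (sphCap_subset_coneCap hu)
      (linearIndependent_of_mem_sphCap hc hw hu hwu)
  have hpos : ∀ u ∈ sphCap n θ, Real.cos θ < u (Fin.last n) → 0 < (gradient G u) (Fin.last n) :=
    fun u hu hu1 => by
      rw [hlast]; exact fderiv_Etop_pos hn hθ hc hc1 hG hh hcap hτ hu hu1
  have hzero : ∀ u ∈ sphCapBdry n θ, (gradient G u) (Fin.last n) = 0 := fun u hu => by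
    rw [hlast]; exact hcap u hu
  have hnonneg : ∀ u ∈ sphCap n θ, 0 ≤ (gradient G u) (Fin.last n) := fun u hu => by
    rcases hu.2.eq_or_lt with h | h
    · exact (hzero u ⟨hu.1, h.symm⟩).ge
    · exact (hpos u hu h).le
  refine ⟨fun u hu w hw huw => ?_, hpos, hzero, ?_⟩
  · by_contra hne
    have h := hlt u hu w hw (Ne.symm hne)
    rw [← hinner, ← huw, hinner, heuler u hu] at h
    exact h.false
  rintro K rfl
  set S := gradient G '' sphCap n θ with hS
  set K := convexHull ℝ S with hK
  have hSK : S ⊆ K := subset_convexHull ℝ S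
  have hKconv : Convex ℝ K := convex_convexHull ℝ S
  have hgrad : ContinuousOn (gradient G) (sphCap n θ) := fun u hu =>
    ((InnerProductSpace.toDual ℝ (V n)).symm.continuous.continuousAt.comp
      ((hG u (sphCap_subset_coneCap hu)).fderiv_right (m := 1)
        (by norm_num)).continuousAt).continuousWithinAt
  have hScomp : IsCompact S := isCompact_sphCap.image_of_continuousOn hgrad
  have hKcomp : IsCompact K := hScomp.convexHull_of_finiteDimensional
  obtain ⟨b, hb⟩ := sphCapBdry_nonempty hn hθ
  have hbC := sphCapBdry_subset_sphCap hb
  have hE : Etop n ∈ sphCap n θ := ⟨norm_Etop, by rw [Etop_last]; exact hc1.le⟩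
  have hKnonneg : ∀ x ∈ K, 0 ≤ x (Fin.last n) := by
    refine convexHull_min (t := {x : V n | 0 ≤ x (Fin.last n)}) ?_ ?_
    · rintro _ ⟨u, hu, rfl⟩; exact hnonneg u hu
    · exact convex_halfSpace_ge
        (EuclideanSpace.proj (𝕜 := ℝ) (Fin.last n)).toLinearMap.isLinear 0
  have hexpose : ∀ u ∈ sphCap n θ, ∀ x ∈ K,
      ⟪u, x⟫ < ⟪u, gradient G u⟫ ∨ x = gradient G u := by
    intro u hu
    refine convexHull_min ?_ (convex_openHalfSpace_union_singleton u (gradient G u))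
    rintro _ ⟨w, hw, rfl⟩
    by_cases hwu : w = u
    · right; rw [hwu]
    · left; simpa only [mem_ofPred_eq, hinner, heuler u hu] using hlt u hu w hw hwu
  have hle : ∀ u ∈ sphCap n θ, ∀ x ∈ K, ⟪u, x⟫ ≤ ⟪u, gradient G u⟫ := fun u hu x hx => by
    rcases hexpose u hu x hx with h | rfl
    exacts [h.le, le_rfl]
  have h_int : (interior K).Nonempty := by
    rw [hK, interior_convexHull_nonempty_iff_affineSpan_eq_top,
      AffineSubspace.affineSpan_eq_top_iff_vectorSpan_eq_top_of_nonempty _ _ _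
        (⟨_, Etop n, hE, rfl⟩ : S.Nonempty), ← Submodule.orthogonal_eq_bot_iff, Submodule.eq_bot_iff]
    intro v hv
    by_contra hv0
    have hconst : ∀ x ∈ coneCap n θ, ∀ y ∈ coneCap n θ, fderiv ℝ G x v = fderiv ℝ G y v := by
      rintro _ ⟨r, hr, u, hu, rfl⟩ _ ⟨t, ht, w, hw, rfl⟩
      rw [fderiv_smul_of_homogeneous hc hc1 hG hh (sphCap_subset_coneCap hu) hr,
        fderiv_smul_of_homogeneous hc hc1 hG hh (sphCap_subset_coneCap hw) ht,
        ← sub_eq_zero, ← hinner, ← hinner, ← inner_sub_right]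
      exact Submodule.inner_left_of_mem_orthogonal
        (vsub_mem_vectorSpan ℝ (mem_image_of_mem _ hu) (mem_image_of_mem _ hw)) hv
    have hEC := sphCap_subset_coneCap hE
    have hE0 : Etop n ≠ 0 := by rw [← norm_pos_iff, norm_Etop]; exact one_pos
    by_cases hvE : ∃ a : ℝ, a • Etop n = v
    · obtain ⟨a, rfl⟩ := hvE
      have ha : a ≠ 0 := by rintro rfl; simp at hv0
      have h := hconst _ hEC _ (sphCap_subset_coneCap hbC)
      rw [map_smul, map_smul, hcap b hb, smul_zero, smul_eq_mul] at h
      have h1 := hpos _ hE (by rwa [Etop_last])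
      rw [hlast] at h1
      exact (mul_ne_zero ha h1.ne') h
    · have hnhds : coneCap n θ ∈ nhds (Etop n + (0 : ℝ) • v) := by
        rw [zero_smul, add_zero]
        apply coneCap_mem_nhds hc <;> simp [Etop_last, norm_Etop, hc1]
      have hcont : Continuous fun ε : ℝ => Etop n + ε • v := by fun_prop
      obtain ⟨ε, hεC, hε⟩ := ((hcont.continuousAt.eventually_mem hnhds).filter_mono
        nhdsWithin_le_nhds |>.and (self_mem_nhdsWithin (s := Ioi (0 : ℝ)))).exists
      have hεne : ε ≠ 0 := (mem_Ioi.1 hε).ne'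
      have h := fderiv_lt_fderiv hc hc1 hG hh hτ hEC hεC (by
        rw [LinearIndependent.pair_iff' hE0]
        intro a ha
        apply hvE
        refine ⟨ε⁻¹ * (a - 1), ?_⟩
        rw [mul_smul, sub_smul, ha, one_smul, add_sub_cancel_left, smul_smul,
          inv_mul_cancel₀ hεne, one_smul])
      rw [add_sub_cancel_left, map_smul, map_smul, hconst _ hEC _ hεC] at h
      exact h.false
  refine ⟨hKcomp, hKconv, h_int, hKnonneg, fun u hu => ?_, ?_⟩
  · have hmax : IsGreatest ((fun y => ⟪u, y⟫) '' K) (G u) := by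
      rw [← heuler u hu, ← hinner]
      refine ⟨⟨_, hSK ⟨u, hu, rfl⟩, rfl⟩, ?_⟩
      rintro _ ⟨x, hx, rfl⟩
      exact hle u hu x hx
    exact hmax.csSup_eq
  apply Subset.antisymm
  · intro x hx
    have hxK : x ∈ K := hKcomp.isClosed.frontier_subset hx
    rcases (hKnonneg x hxK).eq_or_lt with h0 | hxpos
    · exact Or.inr ⟨hxK, h0.symm⟩
    left
    obtain ⟨v, hv0, hv⟩ := hKconv.exists_inner_le_of_mem_frontier h_int hx
    by_cases hvC : v ∈ coneCap n θ
    · obtain ⟨r, hr, u, hu, rfl⟩ := hvC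
      have h := hv _ (hSK ⟨u, hu, rfl⟩)
      rw [real_inner_smul_left, real_inner_smul_left, mul_le_mul_iff_right₀ hr] at h
      rcases hexpose u hu x hxK with h' | rfl
      · exact absurd h h'.not_ge
      · exact ⟨u, hu, rfl⟩
    exfalso
    by_cases hvE : v = v (Fin.last n) • Etop n
    · have hneg : v (Fin.last n) < 0 := by
        by_contra! hge
        rcases hge.eq_or_lt with h0 | h0
        · rw [← h0, zero_smul] at hvE; exact hv0 hvE
        · apply hvC
          rw [hvE]
          exact smul_mem_coneCap (sphCap_subset_coneCap hE) h0
      have h := hv _ (hSK ⟨b, hbC, rfl⟩)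
      rw [hvE, real_inner_smul_left, real_inner_smul_left, real_inner_comm, inner_Etop,
        real_inner_comm, inner_Etop, hzero b hb] at h
      nlinarith
    · obtain ⟨t, hwC, hwb, ht, -⟩ := exists_vertical_projection hθ hvE
      replace ht := ht hvC
      have hwE := fderiv_Etop_of_mem_boundary hc hc1 hG hh hcap hwC hwb
      obtain ⟨r, hr, u, hu, hw⟩ := hwC
      rw [hw, fderiv_smul_of_homogeneous hc hc1 hG hh (sphCap_subset_coneCap hu) hr,
        ← hlast] at hwE
      have h1 := mul_le_mul_of_nonneg_left (hle u hu x hxK) hr.le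
      rw [← real_inner_smul_left, ← real_inner_smul_left, ← hw, inner_add_left, inner_add_left,
        real_inner_smul_left, real_inner_smul_left, real_inner_comm, real_inner_comm x,
        real_inner_comm _ v, real_inner_comm _ (Etop n), inner_Etop, inner_Etop, hwE] at h1
      have h2 := hv _ (hSK ⟨u, hu, rfl⟩)
      rw [real_inner_comm, real_inner_comm x] at h2
      nlinarith [mul_pos ht hxpos]
  · rintro x (⟨u, hu, rfl⟩ | ⟨hxK, hx0⟩)
    · have hu0 : u ≠ 0 := by rintro rfl; simpa using hu.1
      exact mem_frontier_of_inner_le hu0 (hSK ⟨u, hu, rfl⟩) (hle u hu)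
    · have hE0 : -Etop n ≠ 0 := by rw [← norm_pos_iff, norm_neg, norm_Etop]; exact one_pos
      refine mem_frontier_of_inner_le hE0 hxK fun y hy => ?_
      rw [inner_neg_left, inner_neg_left, real_inner_comm, inner_Etop, real_inner_comm,
        inner_Etop, show x (Fin.last n) = 0 from hx0]
      linarith [hKnonneg y hy]
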